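/- arXiv:0710.5272 — 2 statements merged into one kernel-verified Lean document; each statement's English description precedes it below -/
import Mathlib

section
/- Let m ≥ 3 and let h_0,…,h_q be a symmetric one-dimensional mask with q ≤ m−3. Then the one-dimensional anti-reflective matrix AR_m(h) is diagonalized by T_m: T̃_m AR_m(h) T_m = D, where D is the diagonal matrix with entries D_{1,1} = f(0), D_{s,s} = f((s−1)π/(m−1)) for s = 2,…,m−1, and D_{m,m} = f(0). In particular, the first and last columns of T_m are eigenvectors of AR_m(h) with eigenvalue f(0), and the s-th column (2 ≤ s ≤ m−1) is an eigenvector with eigenvalue f((s−1)π/(m−1)). -/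
open Real Matrix

/-- Generating function `f(x) = h_0 + 2 ∑_{k=1}^{q} h_k cos(kx)`. -/
noncomputable def genFun (h : ℕ → ℝ) (q : ℕ) (x : ℝ) : ℝ :=
  h 0 + 2 * ∑ k ∈ Finset.Icc 1 q, h k * Real.cos ((k : ℝ) * x)

/-- Entry `(Q_m)_{s,t} = √(2/(m+1)) · sin(s t π/(m+1))` of the DST-I matrix,
for 1-based indices `s, t`. -/
noncomputable def dstIent (m s t : ℕ) : ℝ :=
  Real.sqrt (2 / ((m : ℝ) + 1)) *
    Real.sin ((s : ℝ) * (t : ℝ) * Real.pi / ((m : ℝ) + 1))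

/-- Entry `p_j = 1 − j/(m−1)` of the vector `p ∈ ℝ^{m−2}` (1-based `j`). -/
noncomputable def pv (m j : ℕ) : ℝ := 1 - (j : ℝ) / ((m : ℝ) - 1)

/-- The normalizing factor `α_m = √(1 + ‖p‖₂²)`. -/
noncomputable def alphaAR (m : ℕ) : ℝ :=
  Real.sqrt (1 + ∑ j ∈ Finset.Icc 1 (m - 2), (pv m j) ^ 2)

/-- The anti-reflective transform `T_m`. -/
noncomputable def arT (m : ℕ) : Matrix (Fin m) (Fin m) ℝ := fun s t =>
  if t.val = 0 then
    (if s.val = 0 then (alphaAR m)⁻¹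
     else if s.val = m - 1 then 0
     else (alphaAR m)⁻¹ * pv m s.val)
  else if t.val = m - 1 then
    (if s.val = 0 then 0
     else if s.val = m - 1 then (alphaAR m)⁻¹
     else (alphaAR m)⁻¹ * pv m (m - 1 - s.val))
  else
    (if s.val = 0 ∨ s.val = m - 1 then 0 else dstIent (m - 2) s.val t.val)

/-- The inverse anti-reflective transform `T̃_m = T_m⁻¹`. -/
noncomputable def arTtil (m : ℕ) : Matrix (Fin m) (Fin m) ℝ := fun s t =>
  if t.val = 0 then
    (if s.val = 0 then alphaAR m
     else if s.val = m - 1 then 0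
     else -∑ j ∈ Finset.Icc 1 (m - 2), dstIent (m - 2) s.val j * pv m j)
  else if t.val = m - 1 then
    (if s.val = 0 then 0
     else if s.val = m - 1 then alphaAR m
     else -∑ j ∈ Finset.Icc 1 (m - 2), dstIent (m - 2) s.val j * pv m (m - 1 - j))
  else
    (if s.val = 0 ∨ s.val = m - 1 then 0 else dstIent (m - 2) s.val t.val)

/-- First-column entries of the 1D anti-reflective matrix, at 1-based row index `s`:
`h_{s−1} + 2∑_{t=s}^{q} h_t` for `1 ≤ s ≤ q+1` and `0` otherwise (so row `1` gets
`h_0 + 2∑_{t=1}^{q} h_t`, row `q+1` gets `h_q`). -/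
noncomputable def arCol (h : ℕ → ℝ) (q s : ℕ) : ℝ :=
  if 1 ≤ s ∧ s ≤ q + 1 then h (s - 1) + 2 * ∑ t ∈ Finset.Icc s q, h t else 0

/-- The 1D anti-reflective blurring matrix `AR_m(h)`: its first column is `arCol`,
its last column is the flip of the first, rows `1` and `m` vanish outside the corner
entries, and its central `(m−2)×(m−2)` submatrix is `τ_{m−2}(h)` with entries
`h_{|s−t|} − h_{s+t} − h_{2(m−1)−s−t}` (1-based `s,t = 1,…,m−2`). -/
noncomputable def arMat (h : ℕ → ℝ) (q m : ℕ) : Matrix (Fin m) (Fin m) ℝ := fun s t =>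
  if t.val = 0 then arCol h q (s.val + 1)
  else if t.val = m - 1 then arCol h q (m - s.val)
  else if s.val = 0 ∨ s.val = m - 1 then 0
  else h ((s.val : ℤ) - (t.val : ℤ)).natAbs - h (s.val + t.val) -
    h (2 * (m - 1) - s.val - t.val)

/-!
The matrix `AR_m(h)` is convolution with the symmetric mask `h`, applied to the extension of a grid
function on `0, …, m - 1` by point reflection about both ends. Affine functions satisfy that
boundary condition, and so do the functions `sin (j x)` with `x` a multiple of `π / (m - 1)`. A
convolution with a symmetric mask multiplies a function obeying `g (s - k) + g (s + k) =
2 cos (k x) g s` by `f(x)`; affine functions obey this with `x = 0` and the sines with their own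
`x`. The columns of `T_m` are exactly these functions. Inverting `T_m` amounts to subtracting the
affine interpolant of the end values and applying the sine transform, which is an involution.
-/

section Sums

variable {M : Type*} [AddCommMonoid M]

theorem sum_univ_fin_add_two {N : ℕ} {F : Fin (N + 2) → M} {G : ℕ → M}
    (hFG : ∀ i : Fin (N + 2), (i : ℕ) ≠ 0 → (i : ℕ) ≠ N + 1 → F i = G i) :
    ∑ i, F i = F 0 + ∑ j ∈ Finset.Icc 1 N, G j + F (Fin.last (N + 1)) := by
  have interior : ∑ i : Fin N, F i.castSucc.succ = ∑ j ∈ Finset.Icc 1 N, G j := by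
    rw [← Finset.Ico_add_one_right_eq_Icc, Finset.sum_Ico_eq_sum_range, Nat.add_sub_cancel,
      ← Fin.sum_univ_eq_sum_range]
    refine Finset.sum_congr rfl fun i _ => ?_
    rw [hFG _ (by simp) (by simp [i.isLt.ne])]
    simp [add_comm]
  rw [Fin.sum_univ_succ, Fin.sum_univ_castSucc, interior, ← add_assoc]
  rfl

theorem sum_Icc_neg_eq_sum_pairs (q : ℕ) (F : ℤ → M) :
    ∑ k ∈ Finset.Icc (-q : ℤ) q, F k = F 0 + ∑ k ∈ Finset.Icc 1 q, (F k + F (-k)) := by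
  induction q with
  | zero => simp
  | succ q ih =>
    rw [Finset.sum_Icc_succ_top (by lia), Nat.cast_succ, Finset.Icc_succ_succ,
      Finset.sum_union (by simp), Finset.sum_pair (by lia), ih, add_assoc,
      add_comm (F (-(q + 1)))]

theorem sum_Ioo_neg_two_mul_eq_sum_folds (N : ℕ) (F : ℤ → M) :
    ∑ j ∈ Finset.Ioo (-(N + 1) : ℤ) (2 * (N + 1)), F j =
      F 0 + ∑ t ∈ Finset.Icc 1 N, (F (-t) + F t + F (2 * (N + 1) - t)) + F (N + 1) := by
  have left : ∑ t ∈ Finset.Icc 1 N, F (-t) = ∑ j ∈ Finset.Ioo (-(N + 1) : ℤ) 0, F j :=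
    Finset.sum_nbij' (fun t => -(t : ℤ)) Int.natAbs
      (by grind) (by grind) (by grind) (by grind) (by simp)
  have middle : ∑ t ∈ Finset.Icc 1 N, F t = ∑ j ∈ Finset.Ioo (0 : ℤ) (N + 1), F j :=
    Finset.sum_nbij' (fun t => (t : ℤ)) Int.toNat
      (by grind) (by grind) (by grind) (by grind) (by simp)
  have right : ∑ t ∈ Finset.Icc 1 N, F (2 * (N + 1) - t) =
      ∑ j ∈ Finset.Ioo (N + 1 : ℤ) (2 * (N + 1)), F j :=
    Finset.sum_nbij' (fun t => 2 * (N + 1) - (t : ℤ)) (fun j => (2 * (N + 1) - j).toNat)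
      (by grind) (by grind) (by grind) (by grind) (by simp)
  have cover : Finset.Ioo (-(N + 1) : ℤ) (2 * (N + 1)) =
      {0} ∪ (Finset.Ioo (-(N + 1) : ℤ) 0 ∪ Finset.Ioo 0 (N + 1 : ℤ) ∪
        Finset.Ioo (N + 1 : ℤ) (2 * (N + 1))) ∪ {(N + 1 : ℤ)} := by
    ext j
    simp only [Finset.mem_union, Finset.mem_singleton, Finset.mem_Ioo]
    lia
  rw [cover, Finset.sum_union, Finset.sum_union, Finset.sum_union, Finset.sum_union,
    Finset.sum_singleton, Finset.sum_singleton, Finset.sum_add_distrib, Finset.sum_add_distrib,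
    left, middle, right]
  all_goals
    rw [Finset.disjoint_left]
    simp only [Finset.mem_union, Finset.mem_singleton, Finset.mem_Ioo]
    lia

end Sums

section Convolution

/-- Convolution of a grid function `g` with the symmetric mask
`h_q, …, h_1, h_0, h_1, …, h_q`. -/
noncomputable def symmConv (h : ℕ → ℝ) (q : ℕ) (g : ℤ → ℝ) (s : ℤ) : ℝ :=
  ∑ k ∈ Finset.Icc (-q : ℤ) q, h k.natAbs * g (s - k)

/-- The anti-reflective boundary condition at the node `a`: the graph of `g` is invariant under
the point reflection in `(a, g a)`. -/
def IsAntireflectiveAt (g : ℤ → ℝ) (a : ℤ) : Prop :=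
  ∀ j, g (2 * a - j) = 2 * g a - g j

theorem isAntireflectiveAt_affine (a b : ℝ) (c : ℤ) :
    IsAntireflectiveAt (fun j => a + b * j) c := fun j => by
  push_cast
  ring

theorem isAntireflectiveAt_sin (a : ℝ) {x : ℝ} {c : ℤ} (hc : sin (c * x) = 0) :
    IsAntireflectiveAt (fun j => a * sin (j * x)) c := fun j => by
  have odd_about : sin (((2 * c - j : ℤ) : ℝ) * x) = -sin (j * x) := by
    rw [show ((2 * c - j : ℤ) : ℝ) * x = 2 * (c * x) - j * x by push_cast; ring,
      sin_sub, sin_two_mul, cos_two_mul, cos_sq', hc]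
    ring
  simp only [odd_about, hc]
  ring

variable {h : ℕ → ℝ} {q : ℕ}

theorem symmConv_eq_genFun_mul {g : ℤ → ℝ} {s : ℤ} {x : ℝ}
    (hg : ∀ k : ℕ, g (s - k) + g (s + k) = 2 * cos (k * x) * g s) :
    symmConv h q g s = genFun h q x * g s := by
  rw [symmConv, sum_Icc_neg_eq_sum_pairs, genFun, add_mul, Finset.mul_sum, Finset.sum_mul]
  congr 1
  · simp
  · refine Finset.sum_congr rfl fun k _ => ?_
    rw [Int.natAbs_neg, Int.natAbs_natCast, sub_neg_eq_add, ← mul_add, hg]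
    ring

theorem symmConv_eq_sum_of_subset (hsupp : ∀ k, q < k → h k = 0) (g : ℤ → ℝ) {s : ℤ}
    {S : Finset ℤ} (hS : Finset.Icc (s - q) (s + q) ⊆ S) :
    symmConv h q g s = ∑ j ∈ S, h (s - j).natAbs * g j := by
  rw [← Finset.sum_subset hS fun j _ hj => by rw [hsupp _ (by grind), zero_mul]]
  exact Finset.sum_nbij' (s - ·) (s - ·) (by grind) (by grind) (by simp) (by simp) (by simp)

theorem symmConv_eq_sum_folds {N : ℕ} (hq : q ≤ N) (hsupp : ∀ k, q < k → h k = 0)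
    {g : ℤ → ℝ} (hg₀ : IsAntireflectiveAt g 0) (hg₁ : IsAntireflectiveAt g (N + 1))
    {s : ℕ} (hs : s ≤ N + 1) :
    symmConv h q g s =
      (h s + 2 * ∑ t ∈ Finset.Icc 1 N, h (s + t)) * g 0 +
      ∑ t ∈ Finset.Icc 1 N,
        (h ((s : ℤ) - t).natAbs - h (s + t) - h (2 * (N + 1) - s - t)) * g t +
      (h (N + 1 - s) + 2 * ∑ t ∈ Finset.Icc 1 N, h (2 * (N + 1) - s - t)) * g (N + 1) := by
  have subset : Finset.Icc (s - q : ℤ) (s + q) ⊆ Finset.Ioo (-(N + 1) : ℤ) (2 * (N + 1)) :=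
    fun j hj => by
      rw [Finset.mem_Icc] at hj
      rw [Finset.mem_Ioo]
      lia
  -- This window is three copies of the interior grid; the outer two reflect onto the middle one.
  have fold : ∀ t ∈ Finset.Icc 1 N,
      h ((s : ℤ) - -t).natAbs * g (-t) + h ((s : ℤ) - t).natAbs * g t +
        h ((s : ℤ) - (2 * (N + 1) - t)).natAbs * g (2 * (N + 1) - t) =
      2 * h (s + t) * g 0 +
        (h ((s : ℤ) - t).natAbs - h (s + t) - h (2 * (N + 1) - s - t)) * g t +
        2 * h (2 * (N + 1) - s - t) * g (N + 1) := by
    intro t ht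
    have ht' := Finset.mem_Icc.1 ht
    have hleft : g (-t) = 2 * g 0 - g t := by simpa using hg₀ t
    rw [hleft, hg₁ t, show ((s : ℤ) - -t).natAbs = s + t by lia,
      show ((s : ℤ) - (2 * (N + 1) - t)).natAbs = 2 * (N + 1) - s - t by lia]
    ring
  rw [symmConv_eq_sum_of_subset hsupp g (S := Finset.Ioo (-(N + 1) : ℤ) (2 * (N + 1))) subset,
    sum_Ioo_neg_two_mul_eq_sum_folds, Finset.sum_congr rfl fold, Finset.sum_add_distrib,
    Finset.sum_add_distrib, ← Finset.sum_mul, ← Finset.sum_mul, ← Finset.mul_sum, ← Finset.mul_sum,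
    sub_zero, Int.natAbs_natCast, show ((s : ℤ) - (N + 1)).natAbs = N + 1 - s by lia]
  ring

end Convolution

section AntireflectiveMatrix

variable {h : ℕ → ℝ} {N q : ℕ}

theorem arCol_add_one {s : ℕ} (hq : q ≤ s + N) (hsupp : ∀ k, q < k → h k = 0) :
    arCol h q (s + 1) = h s + 2 * ∑ t ∈ Finset.Icc 1 N, h (s + t) := by
  have tail : ∑ t ∈ Finset.Icc 1 N, h (s + t) = ∑ t ∈ Finset.Icc (s + 1) q, h t := by
    rw [Finset.sum_subset (Finset.Icc_subset_Icc_right hq)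
      fun t _ ht => hsupp t (by grind)]
    exact Finset.sum_nbij' (s + ·) (· - s) (by grind) (by grind) (by simp) (by grind) (by simp)
  rw [arCol, tail, Nat.add_sub_cancel]
  split_ifs with hs
  · rfl
  · rw [hsupp s (by lia), Finset.Icc_eq_empty (by lia), Finset.sum_empty, mul_zero, add_zero]

theorem arMat_apply_zero (hq : q ≤ N) (hsupp : ∀ k, q < k → h k = 0) (s : Fin (N + 2)) :
    arMat h q (N + 2) s 0 = h s + 2 * ∑ t ∈ Finset.Icc 1 N, h (s + t) :=
  arCol_add_one (by lia) hsupp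

theorem arMat_apply_last (hq : q ≤ N) (hsupp : ∀ k, q < k → h k = 0) (s : Fin (N + 2)) :
    arMat h q (N + 2) s (Fin.last (N + 1)) =
      h (N + 1 - s) + 2 * ∑ t ∈ Finset.Icc 1 N, h (2 * (N + 1) - s - t) := by
  have hs := s.isLt
  have reflect : ∑ t ∈ Finset.Icc 1 N, h (2 * (N + 1) - s - t) =
      ∑ t ∈ Finset.Icc 1 N, h (N + 1 - s + t) :=
    Finset.sum_nbij' (N + 1 - ·) (N + 1 - ·) (by grind) (by grind) (by grind) (by grind)
      fun t ht => congrArg h (by grind)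
  rw [reflect, ← arCol_add_one (by lia) hsupp, ← Nat.sub_add_comm (by lia)]
  simp only [arMat, Fin.val_last, Nat.add_succ_sub_one, Nat.add_one_ne_zero, if_false, if_true]

theorem arMat_apply_of_ne (hq : q ≤ N) (hsupp : ∀ k, q < k → h k = 0) (s : Fin (N + 2))
    {t : Fin (N + 2)} (ht₀ : (t : ℕ) ≠ 0) (ht₁ : (t : ℕ) ≠ N + 1) :
    arMat h q (N + 2) s t =
      h ((s : ℤ) - t).natAbs - h (s + t) - h (2 * (N + 1) - s - t) := by
  simp only [arMat, ht₀, ht₁, if_false, Nat.add_succ_sub_one]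
  -- In an end row the Toeplitz entry cancels one Hankel entry, and the other is off the mask.
  split_ifs with hs
  · rcases hs with hs | hs
    · rw [hs, hsupp (2 * (N + 1) - 0 - t) (by lia)]
      simp
    · rw [hs, hsupp (N + 1 + t) (by lia), show (((N + 1 : ℕ) : ℤ) - t).natAbs = N + 1 - t by lia,
        show 2 * (N + 1) - (N + 1) - t = N + 1 - t by lia]
      ring
  · rfl

theorem arMat_mulVec_eq_symmConv (hq : q ≤ N) (hsupp : ∀ k, q < k → h k = 0)
    {g : ℤ → ℝ} (hg₀ : IsAntireflectiveAt g 0) (hg₁ : IsAntireflectiveAt g (N + 1)) :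
    arMat h q (N + 2) *ᵥ (fun t : Fin (N + 2) => g (t : ℕ)) =
      fun s : Fin (N + 2) => symmConv h q g (s : ℕ) := by
  funext s
  rw [symmConv_eq_sum_folds hq hsupp hg₀ hg₁ s.is_le, mulVec, dotProduct,
    sum_univ_fin_add_two
      (G := fun t => (h ((s : ℤ) - t).natAbs - h (s + t) - h (2 * (N + 1) - s - t)) * g t)
      fun t ht₀ ht₁ => by rw [arMat_apply_of_ne hq hsupp s ht₀ ht₁],
    arMat_apply_zero hq hsupp, arMat_apply_last hq hsupp]
  simp

theorem arMat_mulVec_affine (hq : q ≤ N) (hsupp : ∀ k, q < k → h k = 0) (a b : ℝ) :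
    arMat h q (N + 2) *ᵥ (fun s => a + b * (s : ℕ)) =
      genFun h q 0 • fun s : Fin (N + 2) => a + b * (s : ℕ) := by
  refine (arMat_mulVec_eq_symmConv hq hsupp (isAntireflectiveAt_affine a b 0)
    (isAntireflectiveAt_affine a b (N + 1))).trans (funext fun s => ?_)
  refine symmConv_eq_genFun_mul fun k => ?_
  push_cast
  rw [mul_zero, cos_zero]
  ring

theorem arMat_mulVec_sin (hq : q ≤ N) (hsupp : ∀ k, q < k → h k = 0) (a : ℝ) {x : ℝ}
    (hx : sin ((N + 1) * x) = 0) :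
    arMat h q (N + 2) *ᵥ (fun s => a * sin ((s : ℕ) * x)) =
      genFun h q x • fun s : Fin (N + 2) => a * sin ((s : ℕ) * x) := by
  refine (arMat_mulVec_eq_symmConv hq hsupp (isAntireflectiveAt_sin a (by simp))
    (isAntireflectiveAt_sin a (by exact_mod_cast hx))).trans (funext fun s => ?_)
  refine symmConv_eq_genFun_mul fun k => ?_
  push_cast
  rw [sub_mul, add_mul, sin_sub, sin_add]
  ring

end AntireflectiveMatrix

section SineTransform

theorem sum_range_cos_mul_pi_div {n : ℕ} (hn : n ≠ 0) {c : ℤ} (hc : ¬ (2 * n : ℤ) ∣ c) :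
    ∑ j ∈ Finset.range n, cos (c * π / n * j) = (1 - cos (c * π)) / 2 := by
  have hsin : sin (c * π / n / 2) ≠ 0 := by
    rw [Ne, sin_eq_zero_iff]
    rintro ⟨k, hk⟩
    refine hc ⟨k, ?_⟩
    field_simp at hk
    exact_mod_cast (by linarith : (c : ℝ) = 2 * n * k)
  have dirichlet := sin_mul_sum_cos n (c * π / n) 0
  simp only [add_zero] at dirichlet
  rw [show (n : ℝ) * (c * π / n) / 2 = c * π / 2 by field_simp,
    show ((n : ℝ) - 1) * (c * π / n) / 2 = c * π / 2 - c * π / n / 2 by field_simp,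
    cos_sub] at dirichlet
  have half_angle : c * π = 2 * (c * π / 2) := by ring
  have sin_mul_cos_half : sin (c * π / 2) * cos (c * π / 2) = 0 := by
    have := sin_two_mul (c * π / 2)
    rw [← half_angle, sin_int_mul_pi] at this
    linarith
  have cos_full : cos (c * π) = 1 - 2 * sin (c * π / 2) ^ 2 := by
    rw [half_angle, cos_two_mul, ← half_angle, cos_sq']
    ring
  apply mul_left_cancel₀ hsin
  rw [dirichlet, cos_full]
  linear_combination cos (c * π / n / 2) * sin_mul_cos_half

variable {N : ℕ}

theorem dstIent_zero_left (t : ℕ) : dstIent N 0 t = 0 := by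
  simp [dstIent]

theorem dstIent_add_one_left (t : ℕ) : dstIent N (N + 1) t = 0 := by
  rw [dstIent, show ((N + 1 : ℕ) : ℝ) * t * π / (N + 1) = t * π by push_cast; field_simp,
    sin_nat_mul_pi, mul_zero]

theorem dstIent_mul_dstIent (a j b : ℕ) :
    dstIent N a j * dstIent N j b =
      (N + 1 : ℝ)⁻¹ * (cos (((a - b : ℤ) : ℝ) * π / (N + 1 : ℕ) * j) -
        cos (((a + b : ℤ) : ℝ) * π / (N + 1 : ℕ) * j)) := by
  have hsqrt : √(2 / ((N : ℝ) + 1)) * √(2 / ((N : ℝ) + 1)) = 2 / (N + 1) :=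
    mul_self_sqrt (by positivity)
  have hminus : ((a - b : ℤ) : ℝ) * π / (N + 1 : ℕ) * j =
      a * j * π / (N + 1) - j * b * π / (N + 1) := by
    push_cast
    ring
  have hplus : ((a + b : ℤ) : ℝ) * π / (N + 1 : ℕ) * j =
      a * j * π / (N + 1) + j * b * π / (N + 1) := by
    push_cast
    ring
  rw [hminus, hplus, ← two_mul_sin_mul_sin, dstIent, dstIent, mul_mul_mul_comm, hsqrt]
  ring

theorem sum_dstIent_mul_dstIent {a b : ℕ} (ha : a ≤ N + 1) (hb : b ∈ Finset.Icc 1 N) :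
    ∑ j ∈ Finset.Icc 1 N, dstIent N a j * dstIent N j b = if a = b then 1 else 0 := by
  have hb' := Finset.mem_Icc.1 hb
  have extend : ∑ j ∈ Finset.Icc 1 N, dstIent N a j * dstIent N j b =
      ∑ j ∈ Finset.range (N + 1), dstIent N a j * dstIent N j b := by
    rw [Finset.sum_range_eq_add_Ico _ N.add_one_pos, dstIent_zero_left, mul_zero, zero_add,
      Finset.Ico_add_one_right_eq_Icc]
  have hplus : ¬ (2 * (N + 1 : ℕ) : ℤ) ∣ (a + b : ℤ) := fun hdvd => by
    have := Int.eq_zero_of_abs_lt_dvd hdvd (by rw [abs_lt]; lia)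
    lia
  rw [extend, Finset.sum_congr rfl fun j _ => dstIent_mul_dstIent a j b, ← Finset.mul_sum,
    Finset.sum_sub_distrib, sum_range_cos_mul_pi_div N.add_one_ne_zero hplus]
  split_ifs with hab
  · have hcos : cos (((a + a : ℤ) : ℝ) * π) = 1 := by
      rw [show ((a + a : ℤ) : ℝ) * π = a * (2 * π) by push_cast; ring, cos_nat_mul_two_pi]
    rw [← hab, hcos]
    simp [Nat.cast_add_one_ne_zero]
  · have hminus : ¬ (2 * (N + 1 : ℕ) : ℤ) ∣ (a - b : ℤ) := fun hdvd => by
      have := Int.eq_zero_of_abs_lt_dvd hdvd (by rw [abs_lt]; lia)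
      lia
    rw [sum_range_cos_mul_pi_div N.add_one_ne_zero hminus]
    push_cast
    rw [sub_mul, add_mul, cos_sub, cos_add, sin_nat_mul_pi]
    ring

end SineTransform

section AntireflectiveTransform

variable {N : ℕ}

theorem alphaAR_ne_zero (m : ℕ) : alphaAR m ≠ 0 := by
  unfold alphaAR
  positivity

theorem pv_zero (m : ℕ) : pv m 0 = 1 := by
  simp [pv]

theorem pv_add_two (j : ℕ) : pv (N + 2) j = 1 - j / (N + 1) := by
  rw [pv]
  push_cast
  ring

theorem pv_reflect {j : ℕ} (hj : j ≤ N + 1) : pv (N + 2) (N + 1 - j) = j / (N + 1) := by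
  rw [pv_add_two, Nat.cast_sub hj]
  push_cast
  field_simp
  ring

theorem pv_last : pv (N + 2) (N + 1) = 0 := by
  simpa using pv_reflect (N := N) (Nat.zero_le _)

theorem arT_col_zero :
    (arT (N + 2)).col 0 = fun s : Fin (N + 2) => (alphaAR (N + 2))⁻¹ * pv (N + 2) s := by
  funext s
  simp only [col_apply, arT, Fin.val_zero, if_true, Nat.add_succ_sub_one]
  split_ifs with hs₀ hs₁
  · rw [hs₀, pv_zero, mul_one]
  · rw [hs₁, pv_last, mul_zero]
  · rfl

theorem arT_col_last :
    (arT (N + 2)).col (Fin.last (N + 1)) =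
      fun s : Fin (N + 2) => (alphaAR (N + 2))⁻¹ * pv (N + 2) (N + 1 - s) := by
  funext s
  simp only [col_apply, arT, Fin.val_last, Nat.add_succ_sub_one, Nat.add_one_ne_zero, if_false,
    if_true]
  split_ifs with hs₀ hs₁
  · rw [hs₀, Nat.sub_zero, pv_last, mul_zero]
  · rw [hs₁, Nat.sub_self, pv_zero, mul_one]
  · rfl

theorem arT_col_of_ne {t : Fin (N + 2)} (ht₀ : (t : ℕ) ≠ 0) (ht₁ : (t : ℕ) ≠ N + 1) :
    (arT (N + 2)).col t = fun s : Fin (N + 2) => dstIent N s t := by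
  funext s
  simp only [col_apply, arT, ht₀, ht₁, if_false, Nat.add_succ_sub_one]
  split_ifs with hs
  · rcases hs with hs | hs
    · rw [hs, dstIent_zero_left]
    · rw [hs, dstIent_add_one_left]
  · rfl

theorem arTtil_apply_zero (s : Fin (N + 2)) :
    arTtil (N + 2) s 0 = (if s = 0 then alphaAR (N + 2) else 0) -
      ∑ j ∈ Finset.Icc 1 N, dstIent N s j * pv (N + 2) j := by
  simp only [arTtil, Fin.val_zero, if_true, Nat.add_succ_sub_one, Fin.ext_iff]
  split_ifs with hs₀ hs₁
  · simp [hs₀, dstIent_zero_left]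
  · simp [hs₁, dstIent_add_one_left]
  · simp

theorem arTtil_apply_last (s : Fin (N + 2)) :
    arTtil (N + 2) s (Fin.last (N + 1)) =
      (if s = Fin.last (N + 1) then alphaAR (N + 2) else 0) -
        ∑ j ∈ Finset.Icc 1 N, dstIent N s j * pv (N + 2) (N + 1 - j) := by
  simp only [arTtil, Fin.val_last, if_true, Nat.add_succ_sub_one, Fin.ext_iff,
    Nat.add_one_ne_zero, if_false]
  split_ifs with hs₀ hs₁ hs₂
  · lia
  · simp [hs₀, dstIent_zero_left]
  · simp [hs₂, dstIent_add_one_left]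
  · simp

theorem arTtil_apply_of_ne (s : Fin (N + 2)) {t : Fin (N + 2)} (ht₀ : (t : ℕ) ≠ 0)
    (ht₁ : (t : ℕ) ≠ N + 1) : arTtil (N + 2) s t = dstIent N s t := by
  have hcol : arTtil (N + 2) s t = (arT (N + 2)).col t s := by
    simp only [arTtil, arT, col_apply, Nat.add_succ_sub_one, ht₀, ht₁, if_false]
  rw [hcol, arT_col_of_ne ht₀ ht₁]

-- `T̃` records the end values and sine-transforms what is left after subtracting the affine
-- interpolant of those values.
theorem arTtil_mulVec_apply (w : ℕ → ℝ) (s : Fin (N + 2)) :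
    (arTtil (N + 2) *ᵥ fun t : Fin (N + 2) => w t) s =
      (if s = 0 then alphaAR (N + 2) * w 0 else 0) +
      ∑ j ∈ Finset.Icc 1 N,
        dstIent N s j * (w j - (pv (N + 2) j * w 0 + pv (N + 2) (N + 1 - j) * w (N + 1))) +
      (if s = Fin.last (N + 1) then alphaAR (N + 2) * w (N + 1) else 0) := by
  rw [mulVec, dotProduct, sum_univ_fin_add_two (G := fun t => dstIent N s t * w t)
    fun t ht₀ ht₁ => by rw [arTtil_apply_of_ne s ht₀ ht₁], arTtil_apply_zero, arTtil_apply_last]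
  simp only [mul_sub, mul_add, Finset.sum_sub_distrib, Finset.sum_add_distrib, ← mul_assoc,
    ← Finset.sum_mul, sub_mul, ite_mul, zero_mul, Fin.val_zero, Fin.val_last]
  ring

theorem arTtil_mulVec_arT_col_zero :
    arTtil (N + 2) *ᵥ (arT (N + 2)).col 0 = Pi.single 0 1 := by
  funext s
  rw [arT_col_zero, arTtil_mulVec_apply fun t => (alphaAR (N + 2))⁻¹ * pv (N + 2) t]
  simp [pv_zero, pv_last, alphaAR_ne_zero, Pi.single_apply, mul_comm]

theorem arTtil_mulVec_arT_col_last :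
    arTtil (N + 2) *ᵥ (arT (N + 2)).col (Fin.last (N + 1)) = Pi.single (Fin.last (N + 1)) 1 := by
  funext s
  rw [arT_col_last, arTtil_mulVec_apply fun t => (alphaAR (N + 2))⁻¹ * pv (N + 2) (N + 1 - t)]
  simp [pv_zero, pv_last, alphaAR_ne_zero, Pi.single_apply, mul_comm]

theorem arTtil_mulVec_arT_col_of_ne {t : Fin (N + 2)} (ht₀ : (t : ℕ) ≠ 0)
    (ht₁ : (t : ℕ) ≠ N + 1) :
    arTtil (N + 2) *ᵥ (arT (N + 2)).col t = Pi.single t 1 := by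
  funext s
  rw [arT_col_of_ne ht₀ ht₁, arTtil_mulVec_apply fun s => dstIent N s t]
  simp only [dstIent_zero_left, dstIent_add_one_left, mul_zero, add_zero, sub_zero, ite_self,
    zero_add]
  rw [sum_dstIent_mul_dstIent s.is_le (Finset.mem_Icc.2 (by lia)), Pi.single_apply]
  simp only [Fin.ext_iff]

theorem arTtil_mulVec_arT_col (t : Fin (N + 2)) :
    arTtil (N + 2) *ᵥ (arT (N + 2)).col t = Pi.single t 1 := by
  rcases eq_or_ne t 0 with rfl | ht₀
  · exact arTtil_mulVec_arT_col_zero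
  rcases eq_or_ne t (Fin.last (N + 1)) with rfl | ht₁
  · exact arTtil_mulVec_arT_col_last
  · exact arTtil_mulVec_arT_col_of_ne (Fin.val_ne_zero_iff.2 ht₀) (Fin.val_ne_iff.2 ht₁)

theorem arTtil_mul_arT : arTtil (N + 2) * arT (N + 2) = 1 := by
  refine ext_of_mulVec_single fun t => ?_
  rw [← mulVec_mulVec, mulVec_single_one, arTtil_mulVec_arT_col, one_mulVec]

theorem arMat_mulVec_arT_col {h : ℕ → ℝ} {q : ℕ} (hq : q ≤ N) (hsupp : ∀ k, q < k → h k = 0)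
    (t : Fin (N + 2)) :
    arMat h q (N + 2) *ᵥ (arT (N + 2)).col t =
      (if (t : ℕ) = N + 1 then genFun h q 0 else genFun h q (t * π / (N + 1))) •
        (arT (N + 2)).col t := by
  rcases eq_or_ne t 0 with rfl | ht₀
  · have affine : (arT (N + 2)).col 0 = fun s : Fin (N + 2) =>
        (alphaAR (N + 2))⁻¹ + -(alphaAR (N + 2))⁻¹ / (N + 1) * (s : ℕ) := by
      funext s
      simp only [arT_col_zero, pv_add_two]
      ring
    rw [affine, arMat_mulVec_affine hq hsupp]
    simp
  rcases eq_or_ne t (Fin.last (N + 1)) with rfl | ht₁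
  · have affine : (arT (N + 2)).col (Fin.last (N + 1)) = fun s : Fin (N + 2) =>
        0 + (alphaAR (N + 2))⁻¹ / (N + 1) * (s : ℕ) := by
      funext s
      simp only [arT_col_last, pv_reflect s.is_le]
      ring
    rw [affine, arMat_mulVec_affine hq hsupp]
    simp
  · replace ht₀ : (t : ℕ) ≠ 0 := Fin.val_ne_zero_iff.2 ht₀
    replace ht₁ : (t : ℕ) ≠ N + 1 := Fin.val_ne_iff.2 ht₁
    have sine : (arT (N + 2)).col t = fun s : Fin (N + 2) =>
        √(2 / ((N : ℝ) + 1)) * sin ((s : ℕ) * (t * π / (N + 1))) := by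
      funext s
      simp only [arT_col_of_ne ht₀ ht₁, dstIent, mul_assoc, mul_div_assoc]
    have node : sin ((N + 1) * (t * π / (N + 1))) = 0 := by
      rw [mul_div_cancel₀ _ (by positivity), sin_nat_mul_pi]
    rw [sine, arMat_mulVec_sin hq hsupp _ node, if_neg ht₁]

theorem arMat_mul_arT {h : ℕ → ℝ} {q : ℕ} (hq : q ≤ N) (hsupp : ∀ k, q < k → h k = 0) :
    arMat h q (N + 2) * arT (N + 2) = arT (N + 2) *
      diagonal fun t : Fin (N + 2) =>
        if (t : ℕ) = N + 1 then genFun h q 0 else genFun h q (t * π / (N + 1)) := by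
  ext s t
  rw [mul_diagonal, mul_comm]
  exact congrFun (arMat_mulVec_arT_col hq hsupp t) s

end AntireflectiveTransform

theorem arMat_diagonalization_general (m q : ℕ) (hq : q + 2 ≤ m)
    (h : ℕ → ℝ) (hsupp : ∀ k, q < k → h k = 0) :
    arTtil m * arMat h q m * arT m =
      Matrix.diagonal (fun s : Fin m =>
        if s.val = m - 1 then genFun h q 0
        else genFun h q ((s.val : ℝ) * Real.pi / ((m : ℝ) - 1))) ∧
    arMat h q m * arT m =
      arT m *
        Matrix.diagonal (fun s : Fin m =>
          if s.val = m - 1 then genFun h q 0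
          else genFun h q ((s.val : ℝ) * Real.pi / ((m : ℝ) - 1))) := by
  obtain ⟨N, rfl⟩ := Nat.exists_eq_add_of_le' (le_of_add_le_right hq)
  have cast_sub_one : ((N + 2 : ℕ) : ℝ) - 1 = N + 1 := by
    push_cast
    ring
  have eigen := arMat_mul_arT (Nat.le_of_add_le_add_right hq) hsupp
  rw [cast_sub_one, Nat.add_succ_sub_one]
  exact ⟨by rw [Matrix.mul_assoc, eigen, ← Matrix.mul_assoc, arTtil_mul_arT, Matrix.one_mul],
    eigen⟩

/-- Diagonalization of the 1D anti-reflective matrix: `T̃_m AR_m(h) T_m = D` with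
`D_{1,1} = D_{m,m} = f(0)` and `D_{s,s} = f((s−1)π/(m−1))` for `s = 2,…,m−1`;
in particular the columns of `T_m` are eigenvectors of `AR_m(h)` with those
eigenvalues. -/
theorem arMat_diagonalization (m q : ℕ) (hm : 3 ≤ m) (hq : q ≤ m - 3)
    (h : ℕ → ℝ) (hsupp : ∀ k, q < k → h k = 0) :
    arTtil m * arMat h q m * arT m =
      Matrix.diagonal (fun s : Fin m =>
        if s.val = m - 1 then genFun h q 0
        else genFun h q ((s.val : ℝ) * Real.pi / ((m : ℝ) - 1))) ∧
    arMat h q m * arT m =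
      arT m *
        Matrix.diagonal (fun s : Fin m =>
          if s.val = m - 1 then genFun h q 0
          else genFun h q ((s.val : ℝ) * Real.pi / ((m : ℝ) - 1))) :=
  arMat_diagonalization_general m q (by omega) h hsupp
end

section
/- For every integer m ≥ 3 and every vector f ∈ ℝ^m, ‖T̃_m f‖₂ ≤ (1 + 2‖p‖₂) ‖f‖₂; consequently the spectral norm of T̃_m satisfies ‖T̃_m‖₂ ≤ 1 + 2‖p‖₂, where p ∈ ℝ^{m−2} has entries p_j = 1 − j/(m−1). -/
open Real Matrix

/-- The Euclidean norm `‖f‖₂ = √(∑ i, f_i²)` of a vector `f ∈ ℝ^m`. -/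
noncomputable def l2norm {m : ℕ} (f : Fin m → ℝ) : ℝ :=
  Real.sqrt (∑ i, (f i) ^ 2)

/-!
Write `f = (a, g, b)` with `g ∈ ℝⁿ`, `n = m - 2`. Then `T̃_m f = (α a, Q_n (g - a p - b J p), α b)`,
and since `Q_n` is orthogonal it may be dropped without changing the norm. What remains is
`f + a u + b v` with `u = (α - 1, -p, 0)` and `v = (0, -J p, α - 1)`. From `α² = 1 + ‖p‖²` one gets
`(α - 1)² ≤ ‖p‖²`, hence `‖u‖² + ‖v‖² ≤ 4 ‖p‖²`, and the triangle and Cauchy–Schwarz inequalities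
give `‖f + a u + b v‖ ≤ ‖f‖ + √(a² + b²) · 2 ‖p‖ ≤ (1 + 2 ‖p‖) ‖f‖`.
-/

section DiscreteOrthogonality

lemma sum_range_cos_int_mul_pi_div {N : ℕ} (hN : N ≠ 0) {l : ℤ} (hl : ¬ 2 * (N : ℤ) ∣ l) :
    ∑ k ∈ Finset.range N, cos (l * π / N * k) = (1 - cos (l * π)) / 2 := by
  have hN' : (N : ℝ) ≠ 0 := Nat.cast_ne_zero.mpr hN
  have not_period (k : ℤ) : l * π / N ≠ k * (2 * π) := by
    intro h
    refine hl ⟨k, ?_⟩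
    have : (l : ℝ) * π = 2 * N * k * π := by rw [div_eq_iff hN'] at h; linarith
    exact_mod_cast mul_right_cancel₀ pi_ne_zero this
  set x : ℝ := l * π / 2 with hx
  set y : ℝ := l * π / N / 2 with hy
  have x_eq : N * (l * π / N) / 2 = x := by rw [mul_div_cancel₀ _ hN']
  have x_sub_y_eq : (N - 1) * (l * π / N) / 2 = x - y := by rw [← x_eq]; ring
  have sin_y_ne_zero : sin y ≠ 0 := by
    rw [Ne, sin_eq_zero_iff]
    rintro ⟨k, hk⟩
    exact not_period k (by linarith)
  have sin_mul_cos_x : sin x * cos x = 0 := by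
    have h := sin_two_mul x
    rw [hx, mul_div_cancel₀ _ two_ne_zero, sin_int_mul_pi] at h
    linarith
  have cos_two_mul_x : cos (l * π) = 1 - 2 * sin x ^ 2 := by
    rw [← cos_two_mul_eq_one_sub, hx, mul_div_cancel₀ _ two_ne_zero]
  calc ∑ k ∈ Finset.range N, cos (l * π / N * k)
      = sin x * cos (x - y) / sin y := by
        simpa only [add_zero, x_eq, x_sub_y_eq] using sum_cos N not_period 0
    _ = sin x ^ 2 := by
        rw [cos_sub, div_eq_iff sin_y_ne_zero]
        linear_combination cos y * sin_mul_cos_x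
    _ = (1 - cos (l * π)) / 2 := by rw [cos_two_mul_x]; ring

lemma sum_range_sin_mul_sin_eq_sub (N : ℕ) (a b : ℤ) :
    ∑ k ∈ Finset.range N, sin (a * π / N * k) * sin (b * π / N * k) =
      (∑ k ∈ Finset.range N, cos ((a - b : ℤ) * π / N * k) -
        ∑ k ∈ Finset.range N, cos ((a + b : ℤ) * π / N * k)) / 2 := by
  rw [← Finset.sum_sub_distrib, Finset.sum_div]
  refine Finset.sum_congr rfl fun k _ => ?_
  rw [eq_div_iff two_ne_zero, mul_comm _ (2 : ℝ), ← mul_assoc, two_mul_sin_mul_sin]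
  push_cast
  ring_nf

lemma sum_range_sin_mul_sin_of_not_dvd {N : ℕ} {a b : ℤ}
    (hsub : ¬ 2 * (N : ℤ) ∣ a - b) (hadd : ¬ 2 * (N : ℤ) ∣ a + b) :
    ∑ k ∈ Finset.range N, sin (a * π / N * k) * sin (b * π / N * k) = 0 := by
  have same_parity : cos ((a + b : ℤ) * π) = cos ((a - b : ℤ) * π) := by
    rw [← cos_add_int_mul_two_pi ((a - b : ℤ) * π) b]
    push_cast
    ring_nf
  obtain rfl | hN := eq_or_ne N 0
  · rw [Finset.range_zero, Finset.sum_empty]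
  rw [sum_range_sin_mul_sin_eq_sub, sum_range_cos_int_mul_pi_div hN hsub,
    sum_range_cos_int_mul_pi_div hN hadd, same_parity, sub_self, zero_div]

lemma sum_range_sin_mul_sin_self {N : ℕ} {a : ℤ} (ha : ¬ (N : ℤ) ∣ a) :
    ∑ k ∈ Finset.range N, sin (a * π / N * k) * sin (a * π / N * k) = N / 2 := by
  have hadd : ¬ 2 * (N : ℤ) ∣ a + a := by
    rwa [← two_mul, mul_dvd_mul_iff_left two_ne_zero]
  have even_multiple : cos ((a + a : ℤ) * π) = 1 := by
    rw [← cos_int_mul_two_pi a]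
    push_cast
    ring_nf
  obtain rfl | hN := eq_or_ne N 0
  · simp
  rw [sum_range_sin_mul_sin_eq_sub, sum_range_cos_int_mul_pi_div hN hadd, even_multiple]
  simp

end DiscreteOrthogonality

/-- The DST-I matrix `Q_n`, with the 1-based indices of `dstIent` shifted to `Fin n`. -/
noncomputable def dstI (n : ℕ) : Matrix (Fin n) (Fin n) ℝ :=
  fun i j => dstIent n (i + 1) (j + 1)

lemma dstI_transpose_mul_self_apply (n : ℕ) (i j : Fin n) :
    ((dstI n)ᵀ * dstI n) i j = 2 / ((n : ℝ) + 1) * ∑ k ∈ Finset.range (n + 1),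
      sin (((i : ℤ) + 1 : ℤ) * π / (n + 1 : ℕ) * k) *
        sin (((j : ℤ) + 1 : ℤ) * π / (n + 1 : ℕ) * k) := by
  have hsq := mul_self_sqrt (show 0 ≤ 2 / ((n : ℝ) + 1) by positivity)
  rw [Finset.sum_range_succ', Finset.sum_range, Matrix.mul_apply]
  simp only [Nat.cast_zero, mul_zero, sin_zero, add_zero, Finset.mul_sum]
  refine Finset.sum_congr rfl fun k _ => ?_
  rw [Matrix.transpose_apply, dstI, dstI, dstIent, dstIent, mul_mul_mul_comm, hsq]
  push_cast
  ring_nf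

lemma dstI_transpose_mul_self (n : ℕ) : (dstI n)ᵀ * dstI n = 1 := by
  ext i j
  rw [dstI_transpose_mul_self_apply]
  obtain rfl | hij := eq_or_ne i j
  · have ha : ¬ ((n + 1 : ℕ) : ℤ) ∣ (i : ℤ) + 1 := fun h => by
      have := Int.le_of_dvd (by omega) h
      omega
    rw [sum_range_sin_mul_sin_self ha, Matrix.one_apply_eq]
    push_cast
    field_simp
  · have hsub : ¬ 2 * ((n + 1 : ℕ) : ℤ) ∣ ((i : ℤ) + 1) - ((j : ℤ) + 1) := fun h => by
      have := Int.eq_zero_of_abs_lt_dvd h (abs_lt.mpr (by omega))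
      omega
    have hadd : ¬ 2 * ((n + 1 : ℕ) : ℤ) ∣ ((i : ℤ) + 1) + ((j : ℤ) + 1) := fun h => by
      have := Int.le_of_dvd (by omega) h
      omega
    rw [sum_range_sin_mul_sin_of_not_dvd hsub hadd, mul_zero,
      Matrix.one_apply_ne hij]

section EuclideanNorm

lemma l2norm_nonneg {n : ℕ} (f : Fin n → ℝ) : 0 ≤ l2norm f :=
  sqrt_nonneg _

lemma l2norm_sq {n : ℕ} (f : Fin n → ℝ) : l2norm f ^ 2 = f ⬝ᵥ f := by
  rw [l2norm, sq_sqrt (Finset.sum_nonneg fun i _ => sq_nonneg (f i))]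
  simp only [dotProduct, sq]

lemma l2norm_eq_norm_toLp {n : ℕ} (f : Fin n → ℝ) : l2norm f = ‖WithLp.toLp 2 f‖ := by
  simp only [l2norm, EuclideanSpace.norm_eq, norm_eq_abs, sq_abs]

lemma l2norm_neg {n : ℕ} (f : Fin n → ℝ) : l2norm (-f) = l2norm f := by
  simp only [l2norm, Pi.neg_apply, neg_sq]

lemma l2norm_comp_equiv {m n : ℕ} (f : Fin n → ℝ) (e : Fin m ≃ Fin n) :
    l2norm (f ∘ e) = l2norm f :=
  congrArg sqrt (e.sum_comp fun i => f i ^ 2)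

lemma l2norm_mulVec_of_transpose_mul_self_eq_one {m n : ℕ} {A : Matrix (Fin m) (Fin n) ℝ}
    (hA : Aᵀ * A = 1) (x : Fin n → ℝ) : l2norm (A *ᵥ x) = l2norm x := by
  rw [← sq_eq_sq₀ (l2norm_nonneg _) (l2norm_nonneg _), l2norm_sq, l2norm_sq,
    Matrix.dotProduct_mulVec, Matrix.vecMul_mulVec, hA, Matrix.vecMul_one]

lemma norm_add_smul_add_smul_le {E : Type*} [SeminormedAddCommGroup E] [NormedSpace ℝ E]
    (x u v : E) (a b : ℝ) :
    ‖x + a • u + b • v‖ ≤ ‖x‖ + √(a ^ 2 + b ^ 2) * √(‖u‖ ^ 2 + ‖v‖ ^ 2) := by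
  have cauchy_schwarz : |a| * ‖u‖ + |b| * ‖v‖ ≤ √(a ^ 2 + b ^ 2) * √(‖u‖ ^ 2 + ‖v‖ ^ 2) := by
    simpa [Fin.sum_univ_two] using
      sum_mul_le_sqrt_mul_sqrt Finset.univ ![|a|, |b|] ![‖u‖, ‖v‖]
  calc ‖x + a • u + b • v‖ ≤ ‖x‖ + ‖a • u‖ + ‖b • v‖ := norm_add₃_le
    _ = ‖x‖ + (|a| * ‖u‖ + |b| * ‖v‖) := by
        rw [norm_smul, norm_smul, norm_eq_abs, norm_eq_abs, add_assoc]
    _ ≤ ‖x‖ + √(a ^ 2 + b ^ 2) * √(‖u‖ ^ 2 + ‖v‖ ^ 2) := by gcongr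

lemma l2norm_add_smul_add_smul_le {n : ℕ} (x u v : Fin n → ℝ) (a b : ℝ) :
    l2norm (x + a • u + b • v) ≤
      l2norm x + √(a ^ 2 + b ^ 2) * √(l2norm u ^ 2 + l2norm v ^ 2) := by
  simpa only [l2norm_eq_norm_toLp, WithLp.toLp_add, WithLp.toLp_smul] using
    norm_add_smul_add_smul_le (WithLp.toLp 2 x) (WithLp.toLp 2 u) (WithLp.toLp 2 v) a b

end EuclideanNorm

section Bordered

variable {n : ℕ} {R : Type*}

/-- The vector `(a, g, b)` obtained from `g` by adding a first entry `a` and a last entry `b`. -/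
def bordered (a : R) (g : Fin n → R) (b : R) : Fin (n + 2) → R :=
  Fin.cons a (Fin.snoc g b : Fin (n + 1) → R)

@[simp]
lemma bordered_zero (a : R) (g : Fin n → R) (b : R) : bordered a g b 0 = a := by
  simp only [bordered, Fin.cons_zero]

@[simp]
lemma bordered_castSucc_succ (a : R) (g : Fin n → R) (b : R) (i : Fin n) :
    bordered a g b i.castSucc.succ = g i := by
  simp only [bordered, Fin.cons_succ, Fin.snoc_castSucc]

@[simp]
lemma bordered_last (a : R) (g : Fin n → R) (b : R) :
    bordered a g b (Fin.last (n + 1)) = b := by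
  simp only [bordered, ← Fin.succ_last, Fin.cons_succ, Fin.snoc_last]

lemma eq_bordered_iff {f : Fin (n + 2) → R} {a : R} {g : Fin n → R} {b : R} :
    f = bordered a g b ↔
      f 0 = a ∧ (∀ i : Fin n, f i.castSucc.succ = g i) ∧ f (Fin.last (n + 1)) = b := by
  refine ⟨?_, fun ⟨hzero, hmid, hlast⟩ => funext fun i => ?_⟩
  · rintro rfl
    simp
  · cases i using Fin.cases with
    | zero => simpa using hzero
    | succ i =>
      cases i using Fin.lastCases with
      | last => simpa using hlast
      | cast i => simpa using hmid i

lemma dotProduct_bordered_bordered [NonUnitalNonAssocSemiring R] (a a' b b' : R)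
    (g g' : Fin n → R) :
    bordered a g b ⬝ᵥ bordered a' g' b' = a * a' + g ⬝ᵥ g' + b * b' := by
  simp only [dotProduct]
  rw [Fin.sum_univ_succ, Fin.sum_univ_castSucc, Fin.succ_last]
  simp only [bordered_zero, bordered_castSucc_succ, bordered_last, add_assoc]

lemma l2norm_bordered_sq (a : ℝ) (g : Fin n → ℝ) (b : ℝ) :
    l2norm (bordered a g b) ^ 2 = a ^ 2 + l2norm g ^ 2 + b ^ 2 := by
  rw [l2norm_sq, l2norm_sq, dotProduct_bordered_bordered, sq, sq]

lemma l2norm_bordered_congr {g h : Fin n → ℝ} (hgh : l2norm g = l2norm h) (a b : ℝ) :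
    l2norm (bordered a g b) = l2norm (bordered a h b) := by
  rw [← sq_eq_sq₀ (l2norm_nonneg _) (l2norm_nonneg _), l2norm_bordered_sq, l2norm_bordered_sq,
    hgh]

lemma sqrt_one_add_sq_sub_one_sq_le (x : ℝ) : (√(1 + x ^ 2) - 1) ^ 2 ≤ x ^ 2 := by
  have hsq : √(1 + x ^ 2) ^ 2 = 1 + x ^ 2 := sq_sqrt (by positivity)
  have one_le : 1 ≤ √(1 + x ^ 2) := one_le_sqrt.mpr (by linarith [sq_nonneg x])
  linarith

lemma l2norm_bordered_sqrt_sub_le (p q g : Fin n → ℝ) (a b : ℝ) :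
    l2norm (bordered (√(1 + l2norm p ^ 2) * a) (g - a • p - b • q) (√(1 + l2norm q ^ 2) * b)) ≤
      (1 + √(2 * (l2norm p ^ 2 + l2norm q ^ 2))) * l2norm (bordered a g b) := by
  set x := bordered a g b
  set u := bordered (√(1 + l2norm p ^ 2) - 1) (-p) 0
  set v := bordered 0 (-q) (√(1 + l2norm q ^ 2) - 1)
  have decomposition :
      bordered (√(1 + l2norm p ^ 2) * a) (g - a • p - b • q) (√(1 + l2norm q ^ 2) * b) =
        x + a • u + b • v := by
    refine (eq_bordered_iff.mpr ⟨?_, fun i => ?_, ?_⟩).symm <;>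
      simp only [x, u, v, bordered_zero, bordered_castSucc_succ, bordered_last, Pi.add_apply,
        Pi.sub_apply, Pi.neg_apply, Pi.smul_apply, smul_eq_mul] <;>
      ring
  have uv_le : l2norm u ^ 2 + l2norm v ^ 2 ≤ 2 * (l2norm p ^ 2 + l2norm q ^ 2) := by
    rw [l2norm_bordered_sq, l2norm_bordered_sq, l2norm_neg, l2norm_neg]
    linarith [sqrt_one_add_sq_sub_one_sq_le (l2norm p), sqrt_one_add_sq_sub_one_sq_le (l2norm q)]
  have ends_le : √(a ^ 2 + b ^ 2) ≤ l2norm x := by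
    refine sqrt_le_iff.mpr ⟨l2norm_nonneg x, ?_⟩
    rw [l2norm_bordered_sq]
    linarith [sq_nonneg (l2norm g)]
  calc l2norm (bordered _ (g - a • p - b • q) _)
      = l2norm (x + a • u + b • v) := congrArg l2norm decomposition
    _ ≤ l2norm x + √(a ^ 2 + b ^ 2) * √(l2norm u ^ 2 + l2norm v ^ 2) :=
        l2norm_add_smul_add_smul_le x u v a b
    _ ≤ l2norm x + l2norm x * √(2 * (l2norm p ^ 2 + l2norm q ^ 2)) := by
        gcongr
        exact l2norm_nonneg x
    _ = (1 + √(2 * (l2norm p ^ 2 + l2norm q ^ 2))) * l2norm x := by ring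

end Bordered

section AntiReflective

/-- The vector `p ∈ ℝⁿ` of `T̃_{n+2}`, with the 1-based index of `pv` shifted to `Fin n`; its flip
`J p` is `pVec n ∘ Fin.rev`. -/
noncomputable def pVec (n : ℕ) : Fin n → ℝ :=
  fun i => pv (n + 2) (i + 1)

lemma sum_Icc_one_eq_sum_fin {M : Type*} [AddCommMonoid M] (n : ℕ) (g : ℕ → M) :
    ∑ j ∈ Finset.Icc 1 n, g j = ∑ i : Fin n, g (i + 1) := by
  rw [Fin.sum_univ_eq_sum_range (fun i => g (i + 1)), Finset.range_eq_Ico,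
    Finset.sum_Ico_add' g 0 n 1]
  rfl

lemma sqrt_sum_pv_sq (n : ℕ) :
    √(∑ j ∈ Finset.Icc 1 n, pv (n + 2) j ^ 2) = l2norm (pVec n) :=
  congrArg sqrt (sum_Icc_one_eq_sum_fin n fun j => pv (n + 2) j ^ 2)

lemma alphaAR_add_two (n : ℕ) : alphaAR (n + 2) = √(1 + l2norm (pVec n) ^ 2) := by
  rw [← sqrt_sum_pv_sq, sq_sqrt (Finset.sum_nonneg fun j _ => sq_nonneg _)]
  rfl

lemma arTtil_row_zero (n : ℕ) : arTtil (n + 2) 0 = bordered (alphaAR (n + 2)) 0 0 := by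
  have hne (i : Fin n) : (i : ℕ) ≠ n := i.isLt.ne
  simp [eq_bordered_iff, arTtil, hne]

lemma arTtil_row_last (n : ℕ) :
    arTtil (n + 2) (Fin.last (n + 1)) = bordered 0 0 (alphaAR (n + 2)) := by
  have hne (i : Fin n) : (i : ℕ) ≠ n := i.isLt.ne
  simp [eq_bordered_iff, arTtil, hne]

lemma arTtil_row_castSucc_succ (n : ℕ) (i : Fin n) :
    arTtil (n + 2) i.castSucc.succ =
      bordered (-(dstI n *ᵥ pVec n) i) (dstI n i) (-(dstI n *ᵥ (pVec n ∘ Fin.rev)) i) := by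
  have hne (j : Fin n) : (j : ℕ) ≠ n := j.isLt.ne
  have hrev (j : Fin n) : n + 1 - (j + 1) = n - (j + 1) + 1 := by omega
  simp [eq_bordered_iff, arTtil, hne, sum_Icc_one_eq_sum_fin, mulVec, dotProduct, dstI, pVec,
    hrev]

lemma arTtil_mulVec_bordered (n : ℕ) (a : ℝ) (g : Fin n → ℝ) (b : ℝ) :
    arTtil (n + 2) *ᵥ bordered a g b =
      bordered (alphaAR (n + 2) * a) (dstI n *ᵥ (g - a • pVec n - b • (pVec n ∘ Fin.rev)))
        (alphaAR (n + 2) * b) := by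
  refine eq_bordered_iff.mpr ⟨?_, fun i => ?_, ?_⟩
  · rw [mulVec, arTtil_row_zero, dotProduct_bordered_bordered]
    simp
  · rw [mulVec, arTtil_row_castSucc_succ, dotProduct_bordered_bordered, mulVec_sub, mulVec_sub,
      mulVec_smul, mulVec_smul]
    simp only [mulVec, Pi.sub_apply, Pi.smul_apply, smul_eq_mul]
    ring
  · rw [mulVec, arTtil_row_last, dotProduct_bordered_bordered]
    simp

end AntiReflective

/-- For every `m ≥ 3` and every `f ∈ ℝ^m`, `‖T̃_m f‖₂ ≤ (1 + 2‖p‖₂)‖f‖₂`;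
consequently the spectral norm of `T̃_m` is at most `1 + 2‖p‖₂`. -/
theorem arTtil_norm_bound (m : ℕ) (hm : 3 ≤ m) (f : Fin m → ℝ) :
    l2norm ((arTtil m).mulVec f) ≤
      (1 + 2 * Real.sqrt (∑ j ∈ Finset.Icc 1 (m - 2), (pv m j) ^ 2)) * l2norm f := by
  obtain ⟨n, rfl⟩ : ∃ n, m = n + 2 := ⟨m - 2, by omega⟩
  obtain ⟨a, g, b, rfl⟩ : ∃ a g b, f = bordered a g b :=
    ⟨_, _, _, eq_bordered_iff.mpr ⟨rfl, fun _ => rfl, rfl⟩⟩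
  rw [Nat.add_sub_cancel, sqrt_sum_pv_sq]
  set p := pVec n
  have l2norm_flip : l2norm (p ∘ Fin.rev) = l2norm p := l2norm_comp_equiv p Fin.revPerm
  have sqrt_eq : √(2 * (l2norm p ^ 2 + l2norm p ^ 2)) = 2 * l2norm p := by
    rw [← sqrt_sq (mul_nonneg zero_le_two (l2norm_nonneg p))]
    ring_nf
  calc l2norm (arTtil (n + 2) *ᵥ bordered a g b)
      = l2norm (bordered (√(1 + l2norm p ^ 2) * a) (g - a • p - b • (p ∘ Fin.rev))
          (√(1 + l2norm p ^ 2) * b)) := by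
        rw [arTtil_mulVec_bordered, alphaAR_add_two]
        exact l2norm_bordered_congr
          (l2norm_mulVec_of_transpose_mul_self_eq_one (dstI_transpose_mul_self n) _) _ _
    _ ≤ (1 + 2 * l2norm p) * l2norm (bordered a g b) := by
        simpa only [l2norm_flip, sqrt_eq] using l2norm_bordered_sqrt_sub_le p (p ∘ Fin.rev) g a b
end
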